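/- arXiv:1110.5369 — 3 statements merged into one kernel-verified Lean document; each statement's English description precedes it below -/
import Mathlib

section
/- If the arrangement 𝒜 is central (each ω_i is a nonzero linear form), then the kernel 𝓘₁ of the ℚ-algebra homomorphism ψ : ℚ[e_1,…,e_n] → H⁰(M_1(𝒜)) sending e_i to the Heaviside function x_i is generated by the two families: (1) e_i² − e_i for all i; (3) ∏_{i∈S⁺} e_i · ∏_{j∈S⁻} (e_j − 1) − ∏_{i∈S⁺} (e_i − 1) · ∏_{j∈S⁻} e_j for all pairs of disjoint subsets S⁺, S⁻ ⊆ {1,…,n} such that ⋂_{i∈S⁺} H_i⁺ ∩ ⋂_{j∈S⁻} H_j⁻ = ∅. -/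
/-!
Varchenko–Gelfand presentation for central arrangements (Statement 2): the kernel is
generated by families (1) and (3).
-/

open MvPolynomial Set

variable {V : Type*} [NormedAddCommGroup V] [NormedSpace ℝ V] [FiniteDimensional ℝ V]
variable {n : ℕ}

/-- The complement `M₁(𝒜)` of the central arrangement given by the linear forms `ω i`. -/
def M₁ (ω : Fin n → V →ₗ[ℝ] ℝ) : Set V := {v | ∀ i, ω i v ≠ 0}

/-- The positive open half-space `H i⁺`. -/
def Hplus (ω : Fin n → V →ₗ[ℝ] ℝ) (i : Fin n) : Set V := {v | 0 < ω i v}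

/-- The negative open half-space `H i⁻`. -/
def Hminus (ω : Fin n → V →ₗ[ℝ] ℝ) (i : Fin n) : Set V := {v | ω i v < 0}

/-- The Heaviside function `x i` on `M₁(𝒜)`: `1` on `H i⁺` and `0` on `H i⁻`. -/
noncomputable def heaviside (ω : Fin n → V →ₗ[ℝ] ℝ) (i : Fin n) :
    LocallyConstant (M₁ ω) ℚ where
  toFun v := if 0 < ω i v.1 then 1 else 0
  isLocallyConstant := by
    rw [IsLocallyConstant.iff_exists_open]
    rintro ⟨v, hv⟩
    rcases lt_or_gt_of_ne (hv i) with h | h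
    · refine ⟨{w : M₁ ω | ω i w.1 < 0}, ?_, h, fun w hw => ?_⟩
      · exact (isOpen_lt ((ω i).continuous_of_finiteDimensional.comp
          continuous_subtype_val) continuous_const)
      · simp only [Set.mem_setOf_eq] at hw
        simp [not_lt.mpr hw.le, not_lt.mpr h.le]
    · refine ⟨{w : M₁ ω | 0 < ω i w.1}, ?_, h, fun w hw => ?_⟩
      · exact (isOpen_lt continuous_const ((ω i).continuous_of_finiteDimensional.comp
          continuous_subtype_val))
      · simp only [Set.mem_setOf_eq] at hw
        simp [hw, h]

/-- Family (1): `e i ^ 2 - e i`. -/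
def fam1 (n : ℕ) : Set (MvPolynomial (Fin n) ℚ) :=
  {p | ∃ i : Fin n, p = X i ^ 2 - X i}

/-- Family (3): `∏_{i∈S⁺} e i ∏_{j∈S⁻} (e j - 1) - ∏_{i∈S⁺} (e i - 1) ∏_{j∈S⁻} e j`
for disjoint `S⁺`, `S⁻` with `⋂_{i∈S⁺} H i⁺ ∩ ⋂_{j∈S⁻} H j⁻ = ∅`. -/
def fam3 (ω : Fin n → V →ₗ[ℝ] ℝ) : Set (MvPolynomial (Fin n) ℚ) :=
  {p | ∃ Sp Sm : Finset (Fin n), Disjoint Sp Sm ∧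
    (⋂ i ∈ Sp, Hplus ω i) ∩ (⋂ j ∈ Sm, Hminus ω j) = ∅ ∧
    p = (∏ i ∈ Sp, X i) * (∏ j ∈ Sm, (X j - 1)) -
      (∏ i ∈ Sp, (X i - 1)) * ∏ j ∈ Sm, X j}

/-!
Both ideals are radical ideals determined by their zeros. The kernel of `ψ` consists of the
polynomials vanishing at the sign vectors of the chambers, which are vertices of the cube `{0,1}ⁿ`.
By the combinatorial Nullstellensatz, an ideal `I` containing family (1) contains every polynomial
vanishing on the whole cube; as `I` is coprime to the ideal of the finitely many vertices outside
its zero locus, it contains every polynomial vanishing on that zero locus. Hence it suffices that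
the common zeros of families (1) and (3) are exactly the sign vectors.

At a vertex of the cube, the first product of a relation of family (3) is nonzero precisely when
the vertex is `1` on `S⁺` and `0` on `S⁻`, and the second when it is `0` on `S⁺` and `1` on `S⁻`.
At a sign vector of `v` this says that `v`, respectively `-v`, lies in an intersection of
half-spaces assumed empty; here centrality enters. Conversely, a vertex which is not a sign vector
violates the relation given by `S⁺ = {i | xᵢ = 1}` and `S⁻ = {i | xᵢ = 0}`.
-/

section GridIdeals

variable {σ K : Type*} [Field K] {I : Ideal (MvPolynomial σ K)}

lemma vanishingIdeal_pi_le_of_prod_X_sub_C_mem [Finite σ] {S : σ → Finset K}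
    (hS : ∀ i, ∏ s ∈ S i, (X i - C s) ∈ I) :
    vanishingIdeal K (univ.pi fun i => (S i : Set K)) ≤ I := by
  intro p hp
  by_cases hne : ∀ i, (S i).Nonempty
  · obtain ⟨h, -, rfl⟩ := combinatorial_nullstellensatz_exists_linearCombination S hne p
      fun x hx => by simpa [aeval_eq_eval] using hp x fun i _ => hx i
    rw [Finsupp.linearCombination_apply]
    exact Ideal.sum_mem _ fun i _ => I.mul_mem_left _ (hS i)
  · obtain ⟨i, hi⟩ := not_forall.mp hne
    have one_mem : (1 : MvPolynomial σ K) ∈ I := by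
      simpa [Finset.not_nonempty_iff_eq_empty.mp hi] using hS i
    simp only [(Ideal.eq_top_iff_one I).mpr one_mem, Submodule.mem_top]

lemma sup_vanishingIdeal_eq_top_of_disjoint_zeroLocus {T : Set (σ → K)} (hT : T.Finite)
    (hTI : Disjoint T (zeroLocus K I)) : I ⊔ vanishingIdeal K T = ⊤ := by
  have sup_point_eq_top : ∀ x ∈ hT.toFinset, I ⊔ vanishingIdeal K {x} = ⊤ := by
    intro x hx
    have hxI : x ∉ zeroLocus K I := hTI.notMem_of_mem_left (hT.mem_toFinset.mp hx)
    have hmax : (vanishingIdeal K {x} : Ideal (MvPolynomial σ K)).IsMaximal := inferInstance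
    exact hmax.out.2 _ <| right_lt_sup.mpr fun hle =>
      hxI (le_zeroLocus_iff_le_vanishingIdeal.mpr hle rfl)
  have iInf_points_le : ⨅ x ∈ hT.toFinset, vanishingIdeal K {x} ≤ vanishingIdeal K T := by
    intro p hp x hx
    simp only [Ideal.mem_iInf] at hp
    exact hp x (hT.mem_toFinset.mpr hx) x rfl
  exact top_le_iff.mp <| (Ideal.sup_iInf_eq_top sup_point_eq_top).ge.trans
    (sup_le_sup_left iInf_points_le I)

theorem vanishingIdeal_zeroLocus_of_prod_X_sub_C_mem [Finite σ] {S : σ → Finset K}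
    (hS : ∀ i, ∏ s ∈ S i, (X i - C s) ∈ I) : vanishingIdeal K (zeroLocus K I) = I := by
  refine le_antisymm (fun p hp => ?_) (le_vanishingIdeal_zeroLocus I)
  set grid : Set (σ → K) := univ.pi fun i => (S i : Set K)
  have grid_finite : grid.Finite := Set.Finite.pi fun i => (S i).finite_toSet
  have one_mem : (1 : MvPolynomial σ K) ∈ I ⊔ vanishingIdeal K (grid \ zeroLocus K I) := by
    rw [sup_vanishingIdeal_eq_top_of_disjoint_zeroLocus grid_finite.sdiff disjoint_sdiff_left]
    exact Submodule.mem_top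
  obtain ⟨f, hf, g, hg, hfg⟩ := Submodule.mem_sup.mp one_mem
  have mul_mem : p * g ∈ I := by
    refine vanishingIdeal_pi_le_of_prod_X_sub_C_mem hS fun x hx => ?_
    by_cases hxI : x ∈ zeroLocus K I
    · rw [map_mul, hp x hxI, zero_mul]
    · rw [map_mul, hg x ⟨hx, hxI⟩, mul_zero]
  rw [← mul_one p, ← hfg, mul_add]
  exact I.add_mem (I.mul_mem_left p hf) mul_mem

lemma ker_aeval_locallyConstant {Y : Type*} [TopologicalSpace Y] (f : σ → LocallyConstant Y K) :
    RingHom.ker (aeval (R := K) f).toRingHom = vanishingIdeal K (range fun y i => f i y) := by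
  have aeval_apply (p : MvPolynomial σ K) (y : Y) : aeval f p y = aeval (fun i => f i y) p :=
    comp_aeval_apply f (LocallyConstant.evalₐ K y) p
  ext p
  simp only [RingHom.mem_ker, mem_vanishingIdeal_iff, forall_mem_range, ← aeval_apply]
  exact LocallyConstant.ext_iff

end GridIdeals

lemma prod_mul_prod_sub_one_ne_zero_iff {ι R : Type*} [CommRing R] [IsDomain R] {x : ι → R}
    (hx : ∀ i, x i = 0 ∨ x i = 1) (S T : Finset ι) :
    (∏ i ∈ S, x i) * ∏ j ∈ T, (x j - 1) ≠ 0 ↔ (∀ i ∈ S, x i = 1) ∧ ∀ j ∈ T, x j = 0 := by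
  have ne_zero_iff (i : ι) : x i ≠ 0 ↔ x i = 1 := by
    rcases hx i with h | h <;> simp [h]
  have sub_one_ne_zero_iff (i : ι) : x i - 1 ≠ 0 ↔ x i = 0 := by
    rcases hx i with h | h <;> simp [h]
  simp only [mul_ne_zero_iff, Finset.prod_ne_zero_iff, ne_zero_iff, sub_one_ne_zero_iff]

/-- The intersection of open half-spaces `⋂_{i∈S⁺} H i⁺ ∩ ⋂_{j∈S⁻} H j⁻`, whose emptiness is the
condition in family (3). -/
def halfSpaceInter (ω : Fin n → V →ₗ[ℝ] ℝ) (Sp Sm : Finset (Fin n)) : Set V :=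
  (⋂ i ∈ Sp, Hplus ω i) ∩ ⋂ j ∈ Sm, Hminus ω j

omit [FiniteDimensional ℝ V] in
lemma mem_halfSpaceInter {ω : Fin n → V →ₗ[ℝ] ℝ} {Sp Sm : Finset (Fin n)} {v : V} :
    v ∈ halfSpaceInter ω Sp Sm ↔ (∀ i ∈ Sp, 0 < ω i v) ∧ ∀ j ∈ Sm, ω j v < 0 := by
  simp [halfSpaceInter, Hplus, Hminus]

omit [FiniteDimensional ℝ V] in
lemma neg_mem_halfSpaceInter {ω : Fin n → V →ₗ[ℝ] ℝ} {Sp Sm : Finset (Fin n)} {v : V} :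
    -v ∈ halfSpaceInter ω Sp Sm ↔ v ∈ halfSpaceInter ω Sm Sp := by
  simp only [mem_halfSpaceInter, map_neg, Left.neg_pos_iff, Left.neg_neg_iff, and_comm]

/-- The sign vector of a point of the complement, encoded as the vertex of the cube `{0,1}ⁿ` whose
`i`-th coordinate is the value of the Heaviside function `x i`; it determines the chamber. -/
noncomputable def signVector (ω : Fin n → V →ₗ[ℝ] ℝ) (v : M₁ ω) (i : Fin n) : ℚ :=
  heaviside ω i v

section SignVector

variable {ω : Fin n → V →ₗ[ℝ] ℝ}

lemma signVector_eq_one_iff {v : M₁ ω} {i : Fin n} : signVector ω v i = 1 ↔ 0 < ω i v := by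
  simp [signVector, heaviside]

lemma signVector_eq_zero_iff {v : M₁ ω} {i : Fin n} : signVector ω v i = 0 ↔ ω i v < 0 := by
  simp [signVector, heaviside, (v.2 i).le_iff_lt]

lemma signVector_eq_zero_or_one (v : M₁ ω) (i : Fin n) :
    signVector ω v i = 0 ∨ signVector ω v i = 1 :=
  (lt_or_gt_of_ne (v.2 i)).imp signVector_eq_zero_iff.mpr signVector_eq_one_iff.mpr

lemma prod_signVector_ne_zero_iff (v : M₁ ω) (Sp Sm : Finset (Fin n)) :
    (∏ i ∈ Sp, signVector ω v i) * ∏ j ∈ Sm, (signVector ω v j - 1) ≠ 0 ↔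
      (v : V) ∈ halfSpaceInter ω Sp Sm := by
  simp only [prod_mul_prod_sub_one_ne_zero_iff (signVector_eq_zero_or_one v),
    signVector_eq_one_iff, signVector_eq_zero_iff, mem_halfSpaceInter]

end SignVector

lemma forall_fam1_aeval_eq_zero_iff {x : Fin n → ℚ} :
    (∀ p ∈ fam1 n, aeval x p = 0) ↔ ∀ i, x i = 0 ∨ x i = 1 := by
  have sq_sub_self (i : Fin n) : x i ^ 2 - x i = 0 ↔ x i = 0 ∨ x i = 1 := by
    rw [sub_eq_zero, sq]
    exact IsIdempotentElem.iff_eq_zero_or_one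
  simp [fam1, sq_sub_self]

-- The right-hand product is reordered so that exchanging `Sp` and `Sm` swaps the two sides.
omit [FiniteDimensional ℝ V] in
lemma forall_fam3_aeval_eq_zero_iff {ω : Fin n → V →ₗ[ℝ] ℝ} {x : Fin n → ℚ} :
    (∀ p ∈ fam3 ω, aeval x p = 0) ↔
      ∀ Sp Sm, Disjoint Sp Sm → halfSpaceInter ω Sp Sm = ∅ →
        (∏ i ∈ Sp, x i) * ∏ j ∈ Sm, (x j - 1) = (∏ j ∈ Sm, x j) * ∏ i ∈ Sp, (x i - 1) := by
  have aeval_relation (Sp Sm : Finset (Fin n)) :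
      aeval x ((∏ i ∈ Sp, X i) * ∏ j ∈ Sm, (X j - 1) - (∏ i ∈ Sp, (X i - 1)) * ∏ j ∈ Sm, X j :
          MvPolynomial (Fin n) ℚ) =
        (∏ i ∈ Sp, x i) * ∏ j ∈ Sm, (x j - 1) - (∏ j ∈ Sm, x j) * ∏ i ∈ Sp, (x i - 1) := by
    simp only [map_sub, map_mul, map_prod, map_one, aeval_X, mul_comm]
  constructor
  · intro h Sp Sm hdisj hempty
    exact sub_eq_zero.mp ((aeval_relation Sp Sm).symm.trans (h _ ⟨Sp, Sm, hdisj, hempty, rfl⟩))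
  · rintro h _ ⟨Sp, Sm, hdisj, hempty, rfl⟩
    exact (aeval_relation Sp Sm).trans (sub_eq_zero.mpr (h Sp Sm hdisj hempty))

lemma fam3_aeval_signVector_eq_zero {ω : Fin n → V →ₗ[ℝ] ℝ} (v : M₁ ω) :
    ∀ p ∈ fam3 ω, aeval (signVector ω v) p = 0 := by
  refine forall_fam3_aeval_eq_zero_iff.mpr fun Sp Sm _ hempty => ?_
  have hv : (v : V) ∉ halfSpaceInter ω Sp Sm := hempty ▸ notMem_empty _
  have hneg : (v : V) ∉ halfSpaceInter ω Sm Sp := by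
    rw [← neg_mem_halfSpaceInter, hempty]
    exact notMem_empty _
  rw [not_ne_iff.mp (mt (prod_signVector_ne_zero_iff v Sp Sm).mp hv),
    not_ne_iff.mp (mt (prod_signVector_ne_zero_iff v Sm Sp).mp hneg)]

omit [FiniteDimensional ℝ V] in
lemma halfSpaceInter_nonempty_of_forall_fam3 {ω : Fin n → V →ₗ[ℝ] ℝ} {x : Fin n → ℚ}
    (hx : ∀ i, x i = 0 ∨ x i = 1) (hfam3 : ∀ p ∈ fam3 ω, aeval x p = 0) {Sp Sm : Finset (Fin n)}
    (hSp : ∀ i, i ∈ Sp ↔ x i = 1) (hSm : ∀ i, i ∈ Sm ↔ x i = 0) :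
    (halfSpaceInter ω Sp Sm).Nonempty := by
  by_contra! hempty
  have hdisj : Disjoint Sp Sm := Finset.disjoint_left.mpr fun i hp hm =>
    one_ne_zero (((hSp i).mp hp).symm.trans ((hSm i).mp hm))
  have first_ne_zero : (∏ i ∈ Sp, x i) * ∏ j ∈ Sm, (x j - 1) ≠ 0 :=
    (prod_mul_prod_sub_one_ne_zero_iff hx Sp Sm).mpr
      ⟨fun i => (hSp i).mp, fun j => (hSm j).mp⟩
  have second_ne_zero : (∏ j ∈ Sm, x j) * ∏ i ∈ Sp, (x i - 1) ≠ 0 :=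
    forall_fam3_aeval_eq_zero_iff.mp hfam3 Sp Sm hdisj hempty ▸ first_ne_zero
  obtain ⟨hm, hp⟩ := (prod_mul_prod_sub_one_ne_zero_iff hx Sm Sp).mp second_ne_zero
  -- Both products are nonzero at `x` only if `n = 0`, and then the intersection is all of `V`.
  have zero_mem : (0 : V) ∈ halfSpaceInter ω Sp Sm := mem_halfSpaceInter.mpr
    ⟨fun i hi => absurd ((hp i hi).symm.trans ((hSp i).mp hi)) zero_ne_one,
      fun j hj => absurd ((hm j hj).symm.trans ((hSm j).mp hj)) one_ne_zero⟩
  exact notMem_empty 0 (hempty ▸ zero_mem)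

lemma exists_signVector_eq {ω : Fin n → V →ₗ[ℝ] ℝ} {x : Fin n → ℚ}
    (hx : ∀ i, x i = 0 ∨ x i = 1) (hfam3 : ∀ p ∈ fam3 ω, aeval x p = 0) :
    ∃ v, signVector ω v = x := by
  obtain ⟨v, hv⟩ := halfSpaceInter_nonempty_of_forall_fam3 hx hfam3 (Sp := {i | x i = 1})
    (Sm := {i | x i = 0}) Finset.mem_filter_univ Finset.mem_filter_univ
  simp only [mem_halfSpaceInter, Finset.mem_filter_univ] at hv
  obtain ⟨hpos, hneg⟩ := hv
  have hvM : v ∈ M₁ ω := fun i => (hx i).elim (fun h => (hneg i h).ne) fun h => (hpos i h).ne'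
  refine ⟨⟨v, hvM⟩, funext fun i => ?_⟩
  rcases hx i with h | h
  · rw [h, signVector_eq_zero_iff]
    exact hneg i h
  · rw [h, signVector_eq_one_iff]
    exact hpos i h

theorem zeroLocus_span_fam1_union_fam3 (ω : Fin n → V →ₗ[ℝ] ℝ) :
    zeroLocus ℚ (Ideal.span (fam1 n ∪ fam3 ω)) = range (signVector ω) := by
  ext x
  simp only [zeroLocus_span, mem_ofPred_eq, mem_union, or_imp, forall_and,
    forall_fam1_aeval_eq_zero_iff, mem_range]
  constructor
  · rintro ⟨hx, hfam3⟩
    exact exists_signVector_eq hx hfam3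
  · rintro ⟨v, rfl⟩
    exact ⟨signVector_eq_zero_or_one v, fam3_aeval_signVector_eq_zero v⟩

lemma prod_X_sub_C_mem_span_fam1 (i : Fin n) :
    ∏ s ∈ ({0, 1} : Finset ℚ), (X i - C s) ∈ Ideal.span (fam1 n) := by
  refine Ideal.subset_span ⟨i, ?_⟩
  rw [Finset.prod_pair zero_ne_one, C_0, C_1]
  ring

/-- For a central arrangement, the kernel of
`ψ : ℚ[e₁,…,eₙ] → H⁰(M₁(𝒜))` is generated by families (1) and (3). -/
theorem vg_kernel_central (ω : Fin n → V →ₗ[ℝ] ℝ) (hω : ∀ i, ω i ≠ 0) :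
    RingHom.ker (MvPolynomial.aeval (R := ℚ) (heaviside ω)).toRingHom =
      Ideal.span (fam1 n ∪ fam3 ω) := by
  have grid_mem (i : Fin n) :
      ∏ s ∈ ({0, 1} : Finset ℚ), (X i - C s) ∈ Ideal.span (fam1 n ∪ fam3 ω) :=
    Ideal.span_mono subset_union_left (prod_X_sub_C_mem_span_fam1 i)
  calc RingHom.ker (aeval (R := ℚ) (heaviside ω)).toRingHom
      = vanishingIdeal ℚ (range (signVector ω)) := ker_aeval_locallyConstant (heaviside ω)
    _ = vanishingIdeal ℚ (zeroLocus ℚ (Ideal.span (fam1 n ∪ fam3 ω))) := by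
      rw [zeroLocus_span_fam1_union_fam3]
    _ = Ideal.span (fam1 n ∪ fam3 ω) := vanishingIdeal_zeroLocus_of_prod_X_sub_C_mem grid_mem
end

section
/- Let 𝒜 = {H_1,…,H_n} be a central hyperplane arrangement given by nonzero, pairwise non-proportional linear forms ω_1,…,ω_n on a finite-dimensional real vector space V. Let 𝒞(𝒜) be the collection of signed subsets X = (X⁺, X⁻) of {1,…,n} such that ⋂_{i∈X⁺} H_i⁺ ∩ ⋂_{j∈X⁻} H_j⁻ = ∅ and such that X is minimal with this property (every signed subset Y with support strictly contained in the support of X satisfies ⋂_{i∈Y⁺} H_i⁺ ∩ ⋂_{j∈Y⁻} H_j⁻ ≠ ∅). Then 𝒞(𝒜) satisfies the four signed-circuit axioms of a loop-free oriented matroid on {1,…,n}. -/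
/-!
Statement 9: the signed circuits of a central arrangement satisfy the signed-circuit
axioms of a loop-free oriented matroid.  A signed subset of `Fin n` is encoded as a
pair of disjoint finsets `(X⁺, X⁻)`; the opposite `-X` is `(X⁻, X⁺)`.
-/

open Set

variable {V : Type*} [NormedAddCommGroup V] [NormedSpace ℝ V] [FiniteDimensional ℝ V]
variable {n : ℕ}

/-- The signed circuits of the arrangement: signed subsets `X = (X⁺, X⁻)` with
`⋂_{i∈X⁺} H i⁺ ∩ ⋂_{j∈X⁻} H j⁻ = ∅`, minimal in the sense that every signed subset
with strictly smaller support has nonempty corresponding intersection. -/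
def signedCircuits (ω : Fin n → V →ₗ[ℝ] ℝ) : Set (Finset (Fin n) × Finset (Fin n)) :=
  {X | Disjoint X.1 X.2 ∧
    (⋂ i ∈ X.1, Hplus ω i) ∩ (⋂ j ∈ X.2, Hminus ω j) = ∅ ∧
    ∀ Y : Finset (Fin n) × Finset (Fin n), Disjoint Y.1 Y.2 →
      Y.1 ∪ Y.2 ⊂ X.1 ∪ X.2 →
      ((⋂ i ∈ Y.1, Hplus ω i) ∩ (⋂ j ∈ Y.2, Hminus ω j)).Nonempty}

/-!
By Gordan's theorem of the alternative, the region cut out by a signed subset `X` is empty iff some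
nonzero linear dependency `∑ i, l i • ω i = 0` has its positive entries in `X⁺` and its negative
entries in `X⁻`. Minimality of `X` then says that `X` is the sign pattern of an elementary vector
of the space of dependencies, that is, of a nonzero vector of minimal support.

The circuit axioms hold for the elementary vectors of any subspace of `ι → K`, where `K` is an
ordered field. Elementary vectors with nested supports are proportional. To eliminate `e` between
`X` and `Y`, take the positive combination of their vectors that vanishes at `e`; it is nonzero
because `X ≠ -Y`. The sign pattern of every nonzero vector contains that of an elementary one:
subtracting a suitable multiple of a vector with smaller support shrinks the support without
creating new signs.
-/

section Elementary

variable {ι K : Type*} [Field K] {W : Submodule K (ι → K)} {l m : ι → K}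

/-- An elementary vector of a subspace of `ι → K` (in the sense of Rockafellar): a nonzero vector
whose support is minimal among those of the nonzero vectors of the subspace. -/
def IsElementary (W : Submodule K (ι → K)) (l : ι → K) : Prop :=
  MinimalFor (fun m => m ∈ W ∧ m ≠ 0) Function.support l

lemma IsElementary.smul (hl : IsElementary W l) {c : K} (hc : c ≠ 0) : IsElementary W (c • l) := by
  refine ⟨⟨W.smul_mem c hl.1.1, smul_ne_zero hc hl.1.2⟩, fun m hm hml => ?_⟩
  rw [Function.support_const_smul_of_ne_zero c l hc] at hml ⊢
  exact hl.2 hm hml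

lemma IsElementary.exists_eq_smul (hl : IsElementary W l) (hm : m ∈ W) (hm0 : m ≠ 0)
    (hml : Function.support m ⊆ Function.support l) : ∃ c : K, c ≠ 0 ∧ m = c • l := by
  obtain ⟨e, hme : m e ≠ 0⟩ := Function.ne_iff.1 hm0
  have hle : l e ≠ 0 := hml hme
  refine ⟨m e / l e, div_ne_zero hme hle, ?_⟩
  by_contra hne
  have hsupp : Function.support (m - (m e / l e) • l) ⊆ Function.support l :=
    (Function.support_sub _ _).trans
      (union_subset hml (Function.support_const_smul_subset _ _))
  have he := hl.2 ⟨W.sub_mem hm (W.smul_mem _ hl.1.1), sub_ne_zero.2 hne⟩ hsupp hle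
  simp [hle] at he

end Elementary

section SignedSupport

variable {ι K : Type*} [Fintype ι]

section Zero

variable [Zero K] [LinearOrder K] {l : ι → K} {i : ι}

/-- The sign pattern of a vector as a signed subset. In the product order,
`signedSupport l ≤ X` says that the sign pattern of `l` is contained in the signed subset `X`. -/
def signedSupport (l : ι → K) : Finset ι × Finset ι :=
  (Finset.univ.filter fun i => 0 < l i, Finset.univ.filter fun i => l i < 0)

@[simp]
lemma mem_signedSupport_fst : i ∈ (signedSupport l).1 ↔ 0 < l i := by simp [signedSupport]

@[simp]
lemma mem_signedSupport_snd : i ∈ (signedSupport l).2 ↔ l i < 0 := by simp [signedSupport]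

lemma signedSupport_le_iff {X : Finset ι × Finset ι} :
    signedSupport l ≤ X ↔ (∀ i, 0 < l i → i ∈ X.1) ∧ ∀ i, l i < 0 → i ∈ X.2 := by
  simp [Prod.le_def, Finset.subset_iff]

lemma disjoint_signedSupport (l : ι → K) : Disjoint (signedSupport l).1 (signedSupport l).2 := by
  simpa [Finset.disjoint_left] using fun i (hi : 0 < l i) => hi.le

lemma coe_signedSupport_union [DecidableEq ι] (l : ι → K) :
    ((signedSupport l).1 ∪ (signedSupport l).2 : Finset ι) = Function.support l := by
  ext i
  simp [or_comm]

lemma support_subset_of_signedSupport_le [DecidableEq ι] {X : Finset ι × Finset ι}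
    (h : signedSupport l ≤ X) : Function.support l ⊆ (X.1 ∪ X.2 : Finset ι) := by
  rw [← coe_signedSupport_union, Finset.coe_subset]
  exact Finset.union_subset_union h.1 h.2

lemma signedSupport_eq_of_le [DecidableEq ι] {X : Finset ι × Finset ι} (hX : Disjoint X.1 X.2)
    (hlX : signedSupport l ≤ X)
    (hXl : ((X.1 ∪ X.2 : Finset ι) : Set ι) ⊆ Function.support l) : signedSupport l = X := by
  rw [← coe_signedSupport_union, Finset.coe_subset, Finset.union_subset_iff] at hXl
  refine le_antisymm hlX ⟨?_, ?_⟩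
  · exact Disjoint.left_le_of_le_sup_right hXl.1 (hX.mono_right hlX.2)
  · exact Disjoint.left_le_of_le_sup_left hXl.2 (hX.symm.mono_right hlX.1)

end Zero

section AddCommGroup

variable [AddCommGroup K] [LinearOrder K] [IsOrderedAddMonoid K] {l m : ι → K}

lemma signedSupport_add_le [DecidableEq ι] (l m : ι → K) :
    signedSupport (l + m) ≤ signedSupport l ⊔ signedSupport m := by
  simp only [signedSupport_le_iff, Pi.add_apply, Prod.fst_sup, Prod.snd_sup, Finset.sup_eq_union,
    Finset.mem_union, mem_signedSupport_fst, mem_signedSupport_snd]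
  refine ⟨fun i hi => ?_, fun i hi => ?_⟩ <;> by_contra! hlm
  · exact hi.not_ge (add_nonpos hlm.1 hlm.2)
  · exact hi.not_ge (add_nonneg hlm.1 hlm.2)

lemma signedSupport_sub_le (h : ∀ i, |m i| ≤ |l i|) : signedSupport (l - m) ≤ signedSupport l := by
  simp only [signedSupport_le_iff, Pi.sub_apply, mem_signedSupport_fst, mem_signedSupport_snd]
  refine ⟨fun i hi => ?_, fun i hi => ?_⟩ <;> by_contra! hli
  · exact hi.not_ge <| sub_nonpos.2 <| neg_le_neg_iff.1 <|
      (neg_le_abs _).trans <| abs_of_nonpos hli ▸ h i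
  · exact hi.not_ge <| sub_nonneg.2 <| (le_abs_self _).trans <| abs_of_nonneg hli ▸ h i

end AddCommGroup

variable [Field K] [LinearOrder K] {W : Submodule K (ι → K)} {l m : ι → K}

lemma one_lt_card_signedSupport [DecidableEq ι] (hW : ∀ i, Pi.single i 1 ∉ W)
    (hl : l ∈ W) (hl0 : l ≠ 0) : 1 < ((signedSupport l).1 ∪ (signedSupport l).2).card := by
  obtain ⟨e, he : l e ≠ 0⟩ := Function.ne_iff.1 hl0
  by_contra! hcard
  have hsub : (Function.support l).Subsingleton := by
    rw [← coe_signedSupport_union]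
    exact Finset.card_le_one_iff_subsingleton.1 hcard
  have hsingle : l = l e • Pi.single e 1 := by
    ext i
    rcases eq_or_ne i e with rfl | hie
    · simp
    · simpa [hie] using fun hi => hie (hsub hi he)
  rw [hsingle] at hl
  exact hW e ((W.smul_mem_iff he).1 hl)

variable [IsStrictOrderedRing K]

lemma signedSupport_smul_of_pos {c : K} (hc : 0 < c) (l : ι → K) :
    signedSupport (c • l) = signedSupport l := by
  ext i <;> simp [hc, mul_neg_iff, hc.le]

lemma signedSupport_smul_of_neg {c : K} (hc : c < 0) (l : ι → K) :
    signedSupport (c • l) = (signedSupport l).swap := by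
  ext i <;> simp [mul_pos_iff, mul_neg_iff, hc, hc.not_gt]

lemma exists_signedSupport_sub_smul_le (hm0 : m ≠ 0)
    (hml : Function.support m ⊆ Function.support l) :
    ∃ t : K, signedSupport (l - t • m) ≤ signedSupport l ∧
      Function.support (l - t • m) ⊂ Function.support l := by
  obtain ⟨b, hb : m b ≠ 0⟩ := Function.ne_iff.1 hm0
  obtain ⟨c, hc, hmin⟩ := Finset.exists_min_image ({i | m i ≠ 0} : Finset ι)
    (fun i => |l i / m i|) ⟨b, by simpa using hb⟩
  simp only [Finset.mem_filter, Finset.mem_univ, true_and] at hc hmin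
  have habs (i : ι) : |((l c / m c) • m) i| ≤ |l i| := by
    rcases eq_or_ne (m i) 0 with hi | hi
    · simp [hi]
    · calc |l c / m c * m i| = |l c / m c| * |m i| := abs_mul _ _
        _ ≤ |l i / m i| * |m i| := mul_le_mul_of_nonneg_right (hmin i hi) (abs_nonneg _)
        _ = |l i| := by rw [← abs_mul, div_mul_cancel₀ _ hi]
  refine ⟨l c / m c, signedSupport_sub_le habs, ssubset_iff_exists.2 ⟨fun i hi hli => hi ?_, c, ?_⟩⟩
  · have hmi : m i = 0 := by_contra fun h => hml h hli
    simp [hli, hmi]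
  · exact ⟨hml hc, by simp [hc]⟩

lemma exists_isElementary_signedSupport_le (hl : l ∈ W) (hl0 : l ≠ 0) :
    ∃ z, IsElementary W z ∧ signedSupport z ≤ signedSupport l := by
  obtain ⟨z, ⟨hz, hz0, hzl⟩, hmin⟩ := exists_minimalFor_of_wellFoundedLT
    (fun z => z ∈ W ∧ z ≠ 0 ∧ signedSupport z ≤ signedSupport l) Function.support
    ⟨l, hl, hl0, le_rfl⟩
  refine ⟨z, ⟨⟨hz, hz0⟩, fun m ⟨hm, hm0⟩ hmz => ?_⟩, hzl⟩
  by_contra hzm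
  obtain ⟨a, hza, hma⟩ := not_subset.1 hzm
  obtain ⟨t, hle, hlt⟩ := exists_signedSupport_sub_smul_le hm0 hmz
  have hne : z - t • m ≠ 0 := fun h => hza <| by
    simpa [Function.notMem_support.1 hma] using congrFun h a
  exact hlt.2 (hmin ⟨W.sub_mem hz (W.smul_mem t hm), hne, hle.trans hzl⟩ hlt.1)

lemma IsElementary.signedSupport_eq_or_eq_swap (hl : IsElementary W l) (hm : IsElementary W m)
    (hlm : Function.support l ⊆ Function.support m) :
    signedSupport l = signedSupport m ∨ signedSupport l = (signedSupport m).swap := by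
  obtain ⟨c, hc, rfl⟩ := hm.exists_eq_smul hl.1.1 hl.1.2 hlm
  rcases hc.lt_or_gt with hc | hc
  · exact .inr (signedSupport_smul_of_neg hc m)
  · exact .inl (signedSupport_smul_of_pos hc m)

lemma exists_isElementary_elimination [DecidableEq ι] (hl : l ∈ W) (hm : m ∈ W)
    (hne : signedSupport l ≠ (signedSupport m).swap) {e : ι} (hle : 0 < l e) (hme : m e < 0) :
    ∃ z, IsElementary W z ∧ z e = 0 ∧ signedSupport z ≤ signedSupport l ⊔ signedSupport m := by
  set w := (-m e) • l + l e • m with hw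
  have hwe : w e = 0 := by
    simp only [hw, Pi.add_apply, Pi.smul_apply, smul_eq_mul]
    ring
  have hw0 : w ≠ 0 := fun h => hne <| by
    have hlm : (-m e) • l = (-l e) • m := by rw [neg_smul (l e), eq_neg_iff_add_eq_zero, ← hw, h]
    rw [← signedSupport_smul_of_pos (neg_pos.2 hme) l, hlm,
      signedSupport_smul_of_neg (neg_neg_iff_pos.2 hle) m]
  have hwlm : signedSupport w ≤ signedSupport l ⊔ signedSupport m := by
    simpa only [signedSupport_smul_of_pos (neg_pos.2 hme), signedSupport_smul_of_pos hle]
      using signedSupport_add_le ((-m e) • l) (l e • m)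
  obtain ⟨z, hz, hzw⟩ := exists_isElementary_signedSupport_le
    (W.add_mem (W.smul_mem (-m e) hl) (W.smul_mem (l e) hm)) hw0
  refine ⟨z, hz, ?_, hzw.trans hwlm⟩
  have hzw' := signedSupport_le_iff.1 hzw
  simp only [mem_signedSupport_fst, mem_signedSupport_snd] at hzw'
  exact le_antisymm (not_lt.1 fun h => (hzw'.1 e h).ne' hwe) (not_lt.1 fun h => (hzw'.2 e h).ne hwe)

end SignedSupport

section Dependencies

variable {ι K E : Type*} [Fintype ι] [Semiring K] [AddCommMonoid E] [Module K E] {x : ι → E}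

variable (K) in
/-- The space of linear dependencies `∑ i, l i • x i = 0` of a family of vectors. -/
def dependencies (x : ι → E) : Submodule K (ι → K) :=
  LinearMap.ker (Fintype.linearCombination K x)

lemma mem_dependencies {l : ι → K} : l ∈ dependencies K x ↔ ∑ i, l i • x i = 0 := by
  rw [dependencies, LinearMap.mem_ker, Fintype.linearCombination_apply]

variable [DecidableEq ι]

lemma single_one_mem_dependencies {a : ι} : Pi.single a 1 ∈ dependencies K x ↔ x a = 0 := by
  simp [dependencies, Fintype.linearCombination_apply_single]

lemma add_single_mem_dependencies {a : ι} {l c : ι → K}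
    (hl : l ∈ dependencies K fun i => x i + c i • x a) :
    l + Pi.single a (∑ i, l i * c i) ∈ dependencies K x := by
  simpa [mem_dependencies, add_smul, smul_add, Finset.sum_add_distrib, Pi.single_apply,
    Finset.sum_smul, mul_smul] using hl

end Dependencies

section Gordan

variable {ι K E : Type*} [Field K] [LinearOrder K] [IsStrictOrderedRing K]
  [AddCommGroup E] [Module K E] {ω : ι → E →ₗ[K] K}

lemma exists_pos_forall_add_mul_pos {s : Finset ι} {a : ι → K} (b : ι → K)
    (ha : ∀ i ∈ s, 0 < a i) : ∃ t > 0, ∀ i ∈ s, 0 < a i + t * b i := by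
  obtain ⟨t, ht0, ht⟩ := Order.exists_between_finsets {0} (s.image fun i => a i / (|b i| + 1))
    (by simpa using fun i hi => div_pos (ha i hi) (by positivity))
  simp only [Finset.mem_singleton, forall_eq, Finset.mem_image, forall_exists_index, and_imp,
    forall_apply_eq_imp_iff₂] at ht0 ht
  refine ⟨t, ht0, fun i hi => ?_⟩
  have hti : t * (|b i| + 1) < a i := (lt_div_iff₀ (by positivity)).1 (ht i hi)
  have hbi : t * -b i ≤ t * |b i| := by gcongr; exact neg_le_abs (b i)
  linarith

lemma exists_forall_pos_insert [DecidableEq ι] {s : Finset ι} {a : ι} {v : E}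
    (hs : ∀ i ∈ s, 0 < ω i v) (hv : 0 ≤ ω a v) (ha : ω a ≠ 0) :
    ∃ u, ∀ i ∈ insert a s, 0 < ω i u := by
  obtain ⟨x, hx : ω a x ≠ 0⟩ := DFunLike.ne_iff.1 ha
  set y := ω a x • x
  have hy : 0 < ω a y := by simpa [y] using mul_self_pos.2 hx
  obtain ⟨t, ht, hts⟩ := exists_pos_forall_add_mul_pos (fun i => ω i y) hs
  refine ⟨v + t • y, Finset.forall_mem_insert _ _ _ |>.2 ⟨?_, fun i hi => ?_⟩⟩
  · simpa using add_pos_of_nonneg_of_pos hv (mul_pos ht hy)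
  · simpa using hts i hi

variable [Fintype ι]

/-- Gordan's theorem, by Fourier–Motzkin elimination: if the forms of `s` are positive at `v` and
`ω a` is negative there, adding positive multiples of `ω a` to the former makes them vanish at `v`,
so that a common solution of theirs can be moved along `v` into the kernel of `ω a`. -/
theorem exists_pos_mem_dependencies (s : Finset ι) (ω : ι → E →ₗ[K] K)
    (h : ¬∃ v, ∀ i ∈ s, 0 < ω i v) :
    ∃ l ∈ dependencies K ω, 0 < l ∧ ∀ i ∉ s, l i = 0 := by
  classical
  induction s using Finset.induction_on generalizing ω with
  | empty => simp at h
  | insert a s _ ih =>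
    rcases em' (∃ v, ∀ i ∈ s, 0 < ω i v) with hs | ⟨v, hv⟩
    · obtain ⟨l, hl, hl0, hls⟩ := ih ω hs
      exact ⟨l, hl, hl0, fun i hi => hls i (Finset.notMem_mono (Finset.subset_insert a s) hi)⟩
    by_cases hωa : ω a = 0
    · refine ⟨Pi.single a 1, single_one_mem_dependencies.2 hωa, by simp, fun i hi => ?_⟩
      exact Pi.single_eq_of_ne (fun hia => hi (by simp [hia])) 1
    have hneg {w : E} (hw : ∀ i ∈ s, 0 < ω i w) : ω a w < 0 :=
      not_le.1 fun hle => h (exists_forall_pos_insert hw hle hωa)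
    have hva := hneg hv
    set c : ι → K := fun i => -ω i v / ω a v
    have hc (i : ι) (hi : i ∈ s) : 0 < c i := div_pos_of_neg_of_neg (neg_neg_of_pos (hv i hi)) hva
    obtain ⟨l, hl, hl0, hls⟩ := ih (fun i => ω i + c i • ω a) fun ⟨w, hw⟩ => by
      have hwa : ω a (w - (ω a w / ω a v) • v) = 0 := by simp [hva.ne]
      refine (hneg fun i hi => ?_).ne hwa
      convert hw i hi using 1
      simp only [c, map_sub, map_smul, LinearMap.add_apply, LinearMap.smul_apply, smul_eq_mul]
      ring
    have hsum : 0 ≤ ∑ i, l i * c i := Finset.sum_nonneg fun i _ => by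
      by_cases hi : i ∈ s
      · exact mul_nonneg (hl0.le i) (hc i hi).le
      · simp [hls i hi]
    refine ⟨_, add_single_mem_dependencies hl,
      add_pos_of_pos_of_nonneg hl0 (Pi.single_nonneg.2 hsum), fun i hi => ?_⟩
    rw [Finset.mem_insert, not_or] at hi
    simp [hls i hi.2, hi.1]

lemma exists_mem_dependencies_signedSupport_le {X : Finset ι × Finset ι} (hX : Disjoint X.1 X.2)
    (h : ¬∃ v, (∀ i ∈ X.1, 0 < ω i v) ∧ ∀ j ∈ X.2, ω j v < 0) :
    ∃ l ∈ dependencies K ω, l ≠ 0 ∧ signedSupport l ≤ X := by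
  classical
  set ε : ι → K := fun i => if i ∈ X.1 then 1 else -1
  have hε₁ (i : ι) (hi : i ∈ X.1) : ε i = 1 := if_pos hi
  have hε₂ (i : ι) (hi : i ∉ X.1) : ε i = -1 := if_neg hi
  have hε₀ (i : ι) : ε i ≠ 0 := by by_cases hi : i ∈ X.1 <;> simp [ε, hi]
  obtain ⟨l, hl, hl0, hlX⟩ := exists_pos_mem_dependencies (X.1 ∪ X.2) (fun i => ε i • ω i) <| by
    rintro ⟨v, hv⟩
    refine h ⟨v, fun i hi => ?_, fun j hj => ?_⟩
    · simpa [hε₁ i hi] using hv i (Finset.mem_union_left _ hi)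
    · simpa [hε₂ j (Finset.disjoint_right.1 hX hj)] using hv j (Finset.mem_union_right _ hj)
  have hlX' (i : ι) (hi : l i ≠ 0) : i ∈ X.1 ∨ i ∈ X.2 := by
    rw [← Finset.mem_union]
    exact by_contra fun h => hi (hlX i h)
  refine ⟨l * ε, ?_, fun h0 => hl0.ne' (funext fun i => ?_), signedSupport_le_iff.2
    ⟨fun i hi => by_contra fun hiX => ?_, fun i hi => ?_⟩⟩
  · simpa only [mem_dependencies, Pi.mul_apply, mul_smul] using hl
  · exact (mul_eq_zero.1 (congrFun h0 i)).resolve_right (hε₀ i)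
  · rw [Pi.mul_apply, hε₂ i hiX] at hi
    exact hi.not_ge (mul_nonpos_of_nonneg_of_nonpos (hl0.le i) neg_one_lt_zero.le)
  · refine (hlX' i (left_ne_zero_of_mul hi.ne)).resolve_left fun hiX => ?_
    rw [Pi.mul_apply, hε₁ i hiX, mul_one] at hi
    exact hi.not_ge (hl0.le i)

lemma not_exists_forall_pos_and_forall_neg {l : ι → K} (hl : l ∈ dependencies K ω) (hl0 : l ≠ 0)
    {X : Finset ι × Finset ι} (hlX : signedSupport l ≤ X) :
    ¬∃ v, (∀ i ∈ X.1, 0 < ω i v) ∧ ∀ j ∈ X.2, ω j v < 0 := by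
  rintro ⟨v, hpos, hneg⟩
  rw [signedSupport_le_iff] at hlX
  have hterm (i : ι) (hi : l i ≠ 0) : 0 < l i * ω i v := by
    rcases hi.lt_or_gt with hi | hi
    · exact mul_pos_of_neg_of_neg hi (hneg i (hlX.2 i hi))
    · exact mul_pos hi (hpos i (hlX.1 i hi))
  obtain ⟨e, he⟩ := Function.ne_iff.1 hl0
  have hsum : 0 < ∑ i, l i * ω i v := by
    refine Finset.sum_pos' (fun i _ => ?_) ⟨e, Finset.mem_univ e, hterm e he⟩
    rcases eq_or_ne (l i) 0 with hi | hi
    · simp [hi]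
    · exact (hterm i hi).le
  exact hsum.ne' (by simpa using LinearMap.congr_fun (mem_dependencies.1 hl) v)

end Gordan

section Arrangement

variable {E : Type*} [NormedAddCommGroup E] [NormedSpace ℝ E] {ω : Fin n → E →ₗ[ℝ] ℝ}
  {X : Finset (Fin n) × Finset (Fin n)}

lemma region_eq_empty_iff (hX : Disjoint X.1 X.2) :
    (⋂ i ∈ X.1, Hplus ω i) ∩ (⋂ j ∈ X.2, Hminus ω j) = ∅ ↔
      ∃ l ∈ dependencies ℝ ω, l ≠ 0 ∧ signedSupport l ≤ X := by
  have hregion : ((⋂ i ∈ X.1, Hplus ω i) ∩ (⋂ j ∈ X.2, Hminus ω j)).Nonempty ↔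
      ∃ v, (∀ i ∈ X.1, 0 < ω i v) ∧ ∀ j ∈ X.2, ω j v < 0 := by
    simp [Set.Nonempty, Hplus, Hminus]
  rw [← not_nonempty_iff_eq_empty, hregion]
  exact ⟨exists_mem_dependencies_signedSupport_le hX, fun ⟨_, hl, hl0, hlX⟩ =>
    not_exists_forall_pos_and_forall_neg hl hl0 hlX⟩

lemma mem_signedCircuits_iff :
    X ∈ signedCircuits ω ↔ ∃ l, IsElementary (dependencies ℝ ω) l ∧ signedSupport l = X := by
  constructor
  · rintro ⟨hX, hempty, hmin⟩
    have hsupp {m : Fin n → ℝ} (hm : m ∈ dependencies ℝ ω) (hm0 : m ≠ 0)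
        (hmX : Function.support m ⊆ (X.1 ∪ X.2 : Finset (Fin n))) :
        ((X.1 ∪ X.2 : Finset (Fin n)) : Set (Fin n)) ⊆ Function.support m := by
      rw [← coe_signedSupport_union, Finset.coe_subset] at hmX ⊢
      by_contra hXm
      exact (hmin _ (disjoint_signedSupport m) ⟨hmX, hXm⟩).ne_empty
        ((region_eq_empty_iff (disjoint_signedSupport m)).2 ⟨m, hm, hm0, le_rfl⟩)
    obtain ⟨l, hl, hl0, hlX⟩ := (region_eq_empty_iff hX).1 hempty
    have hlX' := support_subset_of_signedSupport_le hlX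
    refine ⟨l, ⟨⟨hl, hl0⟩, fun m hm hml => hlX'.trans (hsupp hm.1 hm.2 (hml.trans hlX'))⟩, ?_⟩
    exact signedSupport_eq_of_le hX hlX (hsupp hl hl0 hlX')
  · rintro ⟨l, hl, rfl⟩
    refine ⟨disjoint_signedSupport l, ?_, fun Y hY hYl => nonempty_iff_ne_empty.2 fun hempty => ?_⟩
    · exact (region_eq_empty_iff (disjoint_signedSupport l)).2 ⟨l, hl.1.1, hl.1.2, le_rfl⟩
    · obtain ⟨m, hm, hm0, hmY⟩ := (region_eq_empty_iff hY).1 hempty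
      have hmY' := support_subset_of_signedSupport_le hmY
      rw [← Finset.coe_ssubset, coe_signedSupport_union] at hYl
      exact hYl.2 ((hl.2 ⟨hm, hm0⟩ (hmY'.trans hYl.1)).trans hmY')

lemma swap_mem_signedCircuits (hX : X ∈ signedCircuits ω) : X.swap ∈ signedCircuits ω := by
  obtain ⟨l, hl, rfl⟩ := mem_signedCircuits_iff.1 hX
  exact mem_signedCircuits_iff.2
    ⟨(-1 : ℝ) • l, hl.smul (by norm_num), signedSupport_smul_of_neg neg_one_lt_zero l⟩

end Arrangement

theorem signedCircuits_oriented_matroid_general {E : Type*} [NormedAddCommGroup E]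
    [NormedSpace ℝ E] (ω : Fin n → E →ₗ[ℝ] ℝ) (hω : ∀ i, ω i ≠ 0) :
    (∀ X ∈ signedCircuits ω, 1 < (X.1 ∪ X.2).card) ∧
    (∀ X : Finset (Fin n) × Finset (Fin n),
      X ∈ signedCircuits ω ↔ (X.2, X.1) ∈ signedCircuits ω) ∧
    (∀ X ∈ signedCircuits ω, ∀ Y ∈ signedCircuits ω,
      X.1 ∪ X.2 ⊆ Y.1 ∪ Y.2 → X = Y ∨ X = (Y.2, Y.1)) ∧
    (∀ X ∈ signedCircuits ω, ∀ Y ∈ signedCircuits ω, X ≠ (Y.2, Y.1) →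
      ∀ e ∈ X.1 ∩ Y.2, ∃ Z ∈ signedCircuits ω,
        Z.1 ⊆ (X.1 ∪ Y.1).erase e ∧ Z.2 ⊆ (X.2 ∪ Y.2).erase e) := by
  refine ⟨?_, fun X => ⟨swap_mem_signedCircuits, swap_mem_signedCircuits⟩, ?_, ?_⟩
  · intro X hX
    obtain ⟨l, hl, rfl⟩ := mem_signedCircuits_iff.1 hX
    have hloop (i : Fin n) := single_one_mem_dependencies (K := ℝ).not.2 (hω i)
    exact one_lt_card_signedSupport hloop hl.1.1 hl.1.2
  · intro X hX Y hY hXY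
    obtain ⟨l, hl, rfl⟩ := mem_signedCircuits_iff.1 hX
    obtain ⟨m, hm, rfl⟩ := mem_signedCircuits_iff.1 hY
    rw [← Finset.coe_subset, coe_signedSupport_union, coe_signedSupport_union] at hXY
    exact hl.signedSupport_eq_or_eq_swap hm hXY
  · intro X hX Y hY hne e he
    obtain ⟨l, hl, rfl⟩ := mem_signedCircuits_iff.1 hX
    obtain ⟨m, hm, rfl⟩ := mem_signedCircuits_iff.1 hY
    rw [Finset.mem_inter, mem_signedSupport_fst, mem_signedSupport_snd] at he
    obtain ⟨z, hz, hze, hle⟩ := exists_isElementary_elimination hl.1.1 hm.1.1 hne he.1 he.2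
    exact ⟨signedSupport z, mem_signedCircuits_iff.2 ⟨z, hz, rfl⟩,
      Finset.subset_erase.2 ⟨hle.1, by simp [hze]⟩, Finset.subset_erase.2 ⟨hle.2, by simp [hze]⟩⟩

/-- For a central arrangement given by nonzero pairwise
non-proportional linear forms, `𝒞(𝒜)` satisfies the four signed-circuit axioms of a
loop-free oriented matroid on `{1,…,n}`. -/
theorem signedCircuits_oriented_matroid (ω : Fin n → V →ₗ[ℝ] ℝ)
    (hω : ∀ i, ω i ≠ 0)
    (hprop : ∀ i j : Fin n, i ≠ j → ∀ c : ℝ, ω i ≠ c • ω j) :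
    (∀ X ∈ signedCircuits ω, 1 < (X.1 ∪ X.2).card) ∧
    (∀ X : Finset (Fin n) × Finset (Fin n),
      X ∈ signedCircuits ω ↔ (X.2, X.1) ∈ signedCircuits ω) ∧
    (∀ X ∈ signedCircuits ω, ∀ Y ∈ signedCircuits ω,
      X.1 ∪ X.2 ⊆ Y.1 ∪ Y.2 → X = Y ∨ X = (Y.2, Y.1)) ∧
    (∀ X ∈ signedCircuits ω, ∀ Y ∈ signedCircuits ω, X ≠ (Y.2, Y.1) →
      ∀ e ∈ X.1 ∩ Y.2, ∃ Z ∈ signedCircuits ω,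
        Z.1 ⊆ (X.1 ∪ Y.1).erase e ∧ Z.2 ⊆ (X.2 ∪ Y.2).erase e) := by
  exact signedCircuits_oriented_matroid_general ω hω
end

section
/- Let 𝒜 = {H_1,…,H_n} be a central hyperplane arrangement given by nonzero, pairwise non-proportional linear forms, and let 𝒞(𝒜) be its collection of signed circuits (minimal signed subsets X with ⋂_{i∈X⁺} H_i⁺ ∩ ⋂_{j∈X⁻} H_j⁻ = ∅). Then the ℚ-algebra homomorphism P(𝒞(𝒜)) → H⁰(M_1(𝒜)) sending x_i to the Heaviside function x_i is a well-defined isomorphism of ℚ-algebras. -/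
/-!
Statement 10: for a central arrangement, `P(𝒞(𝒜))` is isomorphic to the algebra
`H⁰(M₁(𝒜))` of locally constant functions, via `x i ↦` (Heaviside function `x i`).
-/

open MvPolynomial Set

variable {V : Type*} [NormedAddCommGroup V] [NormedSpace ℝ V] [FiniteDimensional ℝ V]
variable {n : ℕ}

/-- The ideal defining the Gelfand–Rybnikov algebra `P(𝒞)` of a collection `𝒞` of signed
subsets of `{1,…,n}`: generated by `x a ^ 2 - x a` and by
`(∏_{a∈X⁺} x a)·(∏_{a∈X⁻} (1 - x a))` for `X ∈ 𝒞`. -/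
noncomputable def pIdeal (𝒞 : Set (Finset (Fin n) × Finset (Fin n))) :
    Ideal (MvPolynomial (Fin n) ℚ) :=
  Ideal.span ({p | ∃ a : Fin n, p = X a ^ 2 - X a} ∪
    {p | ∃ C ∈ 𝒞, p = (∏ a ∈ C.1, X a) * ∏ a ∈ C.2, (1 - X a)})

/-- The algebra `P(𝒞)`. -/
abbrev PAlg (𝒞 : Set (Finset (Fin n) × Finset (Fin n))) := MvPolynomial (Fin n) ℚ ⧸ pIdeal 𝒞

/-!
For `σ ⊆ {1,…,n}` put `e_σ = ∏_{i∈σ} x i · ∏_{i∉σ} (1 - x i)`. In any algebra generated by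
idempotents `x i`, the `e_σ` sum to `1` and a polynomial `p` in the `x i` equals `∑_σ p(1_σ) e_σ`.
In `H⁰(M₁(𝒜))` the element `e_σ` is the indicator function of the chamber with sign vector `σ`,
which is convex; so these elements span, and `p(1_σ)` can be read off whenever the chamber is
nonempty. It remains to see that `e_σ = 0` in `P(𝒞(𝒜))` when the chamber is empty, i.e. that an
infeasible sign vector contains a signed circuit.

Take a minimal infeasible subsystem. By Gordan's theorem its forms satisfy a nonnegative relation;
by minimality every such relation has full support, which forces all relations to be proportional.
Hence every proper subfamily is linearly independent and realizes all sign patterns, as the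
minimality of a signed circuit over all signs requires.
-/

section SignedProducts

variable {ι k A B : Type*} [CommRing k] [CommRing A] [CommRing B]

/-- The product `∏_{a∈P} x a · ∏_{a∈N} (1 - x a)` attached to the signed subset `(P, N)`. For
`N = Pᶜ` and idempotent `x a` this is the atom `e_P` of the Boolean algebra they generate. -/
def signedProd (x : ι → A) (P N : Finset ι) : A := (∏ a ∈ P, x a) * ∏ a ∈ N, (1 - x a)

lemma map_signedProd {F : Type*} [FunLike F A B] [RingHomClass F A B] (f : F) (x : ι → A)
    (P N : Finset ι) : f (signedProd x P N) = signedProd (fun a => f (x a)) P N := by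
  simp only [signedProd, map_mul, map_prod, map_sub, map_one]

lemma signedProd_dvd_signedProd (x : ι → A) {P P' N N' : Finset ι} (hP : P ⊆ P') (hN : N ⊆ N') :
    signedProd x P N ∣ signedProd x P' N' :=
  mul_dvd_mul (Finset.prod_dvd_prod_of_subset _ _ _ hP) (Finset.prod_dvd_prod_of_subset _ _ _ hN)

lemma signedProd_indicator [DecidableEq ι] (τ P N : Finset ι) :
    signedProd ((τ : Set ι).indicator (1 : ι → A)) P N =
      if P ⊆ τ ∧ Disjoint N τ then 1 else 0 := by
  have hsub (a : ι) : 1 - (τ : Set ι).indicator (1 : ι → A) a = if a ∉ τ then 1 else 0 := by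
    by_cases ha : a ∈ τ <;> simp [ha]
  simp only [signedProd, hsub]
  simp only [indicator_apply, Finset.mem_coe, Pi.one_apply, Finset.prod_boole,
    ite_zero_mul_ite_zero, one_mul, ← Finset.disjoint_left, ← Finset.subset_iff]

lemma mul_prod_eq_prod_of_isIdempotentElem {M : Type*} [CommMonoid M] {f : ι → M} {i : ι}
    (h : IsIdempotentElem (f i)) {s : Finset ι} (hi : i ∈ s) :
    f i * ∏ a ∈ s, f a = ∏ a ∈ s, f a := by
  classical rw [← Finset.mul_prod_erase s f hi, ← mul_assoc, h.eq]

variable [Fintype ι] [DecidableEq ι]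

lemma sum_signedProd_compl (x : ι → A) : ∑ σ : Finset ι, signedProd x σ σᶜ = 1 := by
  simpa [signedProd, Finset.compl_eq_univ_sdiff] using
    (Finset.prod_add x (fun a => 1 - x a) Finset.univ).symm

variable {x : ι → A}

lemma mul_signedProd_compl (hx : ∀ i, IsIdempotentElem (x i)) (i : ι) (σ : Finset ι) :
    x i * signedProd x σ σᶜ = (σ : Set ι).indicator 1 i * signedProd x σ σᶜ := by
  by_cases hi : i ∈ σ
  · simp [hi, signedProd, ← mul_assoc, mul_prod_eq_prod_of_isIdempotentElem (hx i) hi]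
  · have hcompl : (1 - x i) * signedProd x σ σᶜ = signedProd x σ σᶜ := by
      rw [signedProd, mul_left_comm,
        mul_prod_eq_prod_of_isIdempotentElem (f := fun a => 1 - x a) (hx i).one_sub
          (Finset.mem_compl.2 hi)]
    rw [indicator_of_notMem (Finset.mem_coe.not.2 hi)]
    linear_combination -hcompl

variable [Algebra k A]

lemma aeval_mul_signedProd_compl (hx : ∀ i, IsIdempotentElem (x i)) (p : MvPolynomial ι k)
    (σ : Finset ι) :
    aeval x p * signedProd x σ σᶜ =
      eval ((σ : Set ι).indicator 1) p • signedProd x σ σᶜ := by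
  induction p using MvPolynomial.induction_on with
  | C a => simp [Algebra.smul_def]
  | add p q hp hq => simp only [map_add, add_mul, add_smul, hp, hq]
  | mul_X p i hp =>
    have hi : x i * signedProd x σ σᶜ =
        (σ : Set ι).indicator (1 : ι → k) i • signedProd x σ σᶜ := by
      rw [mul_signedProd_compl hx]
      by_cases h : i ∈ σ <;> simp [h]
    rw [map_mul, aeval_X, mul_assoc, hi, mul_smul_comm, hp, map_mul, eval_X, smul_smul, mul_comm]

theorem aeval_eq_sum_signedProd (hx : ∀ i, IsIdempotentElem (x i)) (p : MvPolynomial ι k) :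
    aeval x p = ∑ σ : Finset ι, eval ((σ : Set ι).indicator 1) p • signedProd x σ σᶜ := by
  simp_rw [← aeval_mul_signedProd_compl hx, ← Finset.mul_sum, sum_signedProd_compl, mul_one]

end SignedProducts

namespace PAlg

variable {𝒞 : Set (Finset (Fin n) × Finset (Fin n))} {A : Type*} [CommRing A] [Algebra ℚ A]

variable (𝒞) in
/-- The generator `x i` of `P(𝒞)`. -/
noncomputable def gen (i : Fin n) : PAlg 𝒞 := Ideal.Quotient.mk (pIdeal 𝒞) (X i)

lemma isIdempotentElem_gen (i : Fin n) : IsIdempotentElem (gen 𝒞 i) := by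
  have h : (X i ^ 2 - X i : MvPolynomial (Fin n) ℚ) ∈ pIdeal 𝒞 :=
    Ideal.subset_span (Or.inl ⟨i, rfl⟩)
  rw [IsIdempotentElem, ← sq]
  exact Ideal.Quotient.eq.2 h

lemma signedProd_gen_eq_zero {D : Finset (Fin n) × Finset (Fin n)} (hD : D ∈ 𝒞) :
    signedProd (gen 𝒞) D.1 D.2 = 0 := by
  have h : signedProd X D.1 D.2 ∈ pIdeal 𝒞 := Ideal.subset_span (Or.inr ⟨D, hD, rfl⟩)
  exact (map_signedProd (Ideal.Quotient.mk (pIdeal 𝒞)) X D.1 D.2).symm.trans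
    (Ideal.Quotient.eq_zero_iff_mem.2 h)

lemma aeval_gen_surjective :
    Function.Surjective (aeval (gen 𝒞) : MvPolynomial (Fin n) ℚ →ₐ[ℚ] PAlg 𝒞) := by
  have h : aeval (gen 𝒞) = Ideal.Quotient.mkₐ ℚ (pIdeal 𝒞) := by ext i; simp [gen]
  rw [h]
  exact Ideal.Quotient.mkₐ_surjective ℚ _

/-- The universal property of `P(𝒞)`: elements of a `ℚ`-algebra that satisfy its defining relations
determine a homomorphism from it. -/
noncomputable def lift (x : Fin n → A) (hx : ∀ i, IsIdempotentElem (x i))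
    (h𝒞 : ∀ D ∈ 𝒞, signedProd x D.1 D.2 = 0) : PAlg 𝒞 →ₐ[ℚ] A :=
  Ideal.Quotient.liftₐ (pIdeal 𝒞) (aeval x) fun p hp => by
    refine (Ideal.span_le (I := RingHom.ker (aeval (R := ℚ) x))).2 ?_ hp
    rintro _ (⟨a, rfl⟩ | ⟨D, hD, rfl⟩)
    · simp [RingHom.mem_ker, sq, (hx a).eq]
    · simpa [RingHom.mem_ker, signedProd] using h𝒞 D hD

@[simp]
lemma lift_gen (x : Fin n → A) (hx : ∀ i, IsIdempotentElem (x i))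
    (h𝒞 : ∀ D ∈ 𝒞, signedProd x D.1 D.2 = 0) (i : Fin n) : lift x hx h𝒞 (gen 𝒞 i) = x i :=
  aeval_X x i

end PAlg

section LinearInequalities

variable {ι E : Type*} [Fintype ι] [AddCommGroup E] [Module ℝ E] {w : ι → E →ₗ[ℝ] ℝ}

lemma comp_pi_eq_sum_smul [DecidableEq ι] (f : (ι → ℝ) →ₗ[ℝ] ℝ) (w : ι → E →ₗ[ℝ] ℝ) :
    f ∘ₗ LinearMap.pi w = ∑ i, f (Pi.single i 1) • w i := by
  ext v
  simp only [LinearMap.comp_apply, LinearMap.sum_apply, LinearMap.smul_apply, smul_eq_mul]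
  rw [pi_eq_sum_univ' (LinearMap.pi w v), map_sum]
  simp only [map_smul, smul_eq_mul, LinearMap.pi_apply, mul_comm]

/-- **Gordan's theorem**. -/
theorem exists_nonneg_relation_of_infeasible (h : ¬ ∃ v, ∀ i, 0 < w i v) :
    ∃ c : ι → ℝ, 0 ≤ c ∧ c ≠ 0 ∧ ∑ i, c i • w i = 0 := by
  classical
  have hdisj : Disjoint (univ.pi fun _ : ι => Ioi (0 : ℝ)) (LinearMap.range (LinearMap.pi w)) := by
    rw [Set.disjoint_left]
    rintro _ hx ⟨v, rfl⟩
    exact h ⟨v, fun i => hx i (mem_univ i)⟩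
  obtain ⟨f, u, hf_orthant, hf_range⟩ := geometric_hahn_banach_open
    (convex_pi fun _ _ => convex_Ioi 0) (isOpen_set_pi finite_univ fun _ _ => isOpen_Ioi)
    (LinearMap.range (LinearMap.pi w)).convex hdisj
  have hu : u ≤ 0 := by simpa using hf_range 0 (Submodule.zero_mem _)
  have hf_zero : f.toLinearMap ∘ₗ LinearMap.pi w = 0 := by
    by_contra hne
    obtain ⟨v, hv⟩ := LinearMap.surjective hne (u - 1)
    have hv' := hf_range _ (LinearMap.mem_range_self (LinearMap.pi w) v)
    simp only [LinearMap.comp_apply, ContinuousLinearMap.coe_coe] at hv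
    linarith
  have hf_nonpos : ∀ x, 0 ≤ x → f x ≤ 0 := by
    intro x hx
    have hx : x ∈ closure (univ.pi fun _ : ι => Ioi (0 : ℝ)) := by
      simpa [closure_pi_set, Pi.le_def] using hx
    exact closure_minimal (fun y hy => (hf_orthant y hy).le.trans hu)
      (isClosed_le f.continuous continuous_const) hx
  refine ⟨fun i => -f (Pi.single i 1), fun i => ?_, fun hc => ?_, ?_⟩
  · exact neg_nonneg.2 (hf_nonpos _ (Pi.single_nonneg.2 zero_le_one))
  · have hf_one : f 1 < 0 := (hf_orthant 1 fun _ _ => zero_lt_one' ℝ).trans_le hu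
    have hsingle : ∀ i, f (Pi.single i 1) = 0 := fun i => neg_eq_zero.1 (congrFun hc i)
    rw [pi_eq_sum_univ' (1 : ι → ℝ), map_sum] at hf_one
    simp [hsingle] at hf_one
  · have hsum := comp_pi_eq_sum_smul f.toLinearMap w
    rw [hf_zero] at hsum
    ext v
    simpa using LinearMap.congr_fun hsum.symm v

variable (w) in
/-- The system of strict inequalities `0 < w i` has no solution, but acquires one as soon as any
single inequality is dropped. -/
structure MinimallyInfeasible : Prop where
  infeasible : ¬ ∃ v, ∀ i, 0 < w i v
  feasible_of_drop : ∀ i, ∃ v, ∀ j ≠ i, 0 < w j v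

namespace MinimallyInfeasible

lemma relation_pos (hw : MinimallyInfeasible w) {c : ι → ℝ} (hc : 0 ≤ c) (hc_ne : c ≠ 0)
    (hrel : ∑ i, c i • w i = 0) (i : ι) : 0 < c i := by
  refine (hc i).lt_of_ne' fun hi => hc_ne ?_
  obtain ⟨v, hv⟩ := hw.feasible_of_drop i
  have hterm : ∀ j, 0 ≤ c j * w j v := fun j => by
    rcases eq_or_ne j i with rfl | hj
    · simp [hi]
    · exact mul_nonneg (hc j) (hv j hj).le
  have hsum : ∑ j, c j * w j v = 0 := by simpa using LinearMap.congr_fun hrel v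
  have hzero := (Finset.sum_eq_zero_iff_of_nonneg fun j _ => hterm j).1 hsum
  ext j
  rcases eq_or_ne j i with rfl | hj
  · exact hi
  · exact (mul_eq_zero.1 (hzero j (Finset.mem_univ j))).resolve_right (hv j hj).ne'

lemma relation_eq_zero (hw : MinimallyInfeasible w) {ν : ι → ℝ} (hν : ∑ i, ν i • w i = 0)
    {i : ι} (hi : ν i = 0) : ν = 0 := by
  obtain ⟨c, hc, hc_ne, hrel⟩ := exists_nonneg_relation_of_infeasible hw.infeasible
  have hc_pos := hw.relation_pos hc hc_ne hrel
  have : Nonempty ι := ⟨i⟩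
  obtain ⟨k, hk⟩ := Finite.exists_max fun j => ν j / c j
  set m := ν k / c k
  -- The largest ratio `m` makes `m • c - ν` a nonnegative relation that vanishes at `k`.
  have hdiff : m • c - ν = 0 := by
    by_contra hne
    refine (hw.relation_pos (fun j => ?_) hne ?_ k).ne' ?_
    · simpa using (div_le_iff₀ (hc_pos j)).1 (hk j)
    · ext v
      have hrel_v : ∑ j, c j * w j v = 0 := by simpa using LinearMap.congr_fun hrel v
      have hν_v : ∑ j, ν j * w j v = 0 := by simpa using LinearMap.congr_fun hν v
      simp [sub_mul, mul_assoc, ← Finset.mul_sum, hrel_v, hν_v]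
    · simp [m, (hc_pos k).ne']
  have hm : m = 0 := by simpa [hi, (hc_pos i).ne'] using congrFun hdiff i
  simpa [hm] using hdiff

end MinimallyInfeasible

end LinearInequalities

section MinimalSubsystem

variable {ι E : Type*} [AddCommGroup E] [Module ℝ E] {w : ι → E →ₗ[ℝ] ℝ} {S T : Finset ι}

lemma MinimallyInfeasible.exists_forall_ne_apply_eq [Finite ι] (hw : MinimallyInfeasible w) (i : ι)
    (b : ι → ℝ) : ∃ v, ∀ j ≠ i, w j v = b j := by
  classical
  have := Fintype.ofFinite ι
  have htop : LinearMap.range (LinearMap.pi w) ⊔ ℝ ∙ (Pi.single i 1 : ι → ℝ) = ⊤ := by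
    by_contra hne
    obtain ⟨f, hf_ne, hf⟩ := Submodule.exists_le_ker_of_lt_top _ (lt_top_iff_ne_top.2 hne)
    obtain ⟨hf_range, hf_single⟩ := sup_le_iff.1 hf
    have hrel : ∑ j, f (Pi.single j 1) • w j = 0 := by
      rw [← comp_pi_eq_sum_smul, LinearMap.range_le_ker_iff.1 hf_range]
    have hi : f (Pi.single i 1) = 0 := by
      simpa [Submodule.span_singleton_le_iff_mem] using hf_single
    have hzero := hw.relation_eq_zero hrel hi
    exact hf_ne (LinearMap.pi_ext' fun j => LinearMap.ext_ring (congrFun hzero j))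
  obtain ⟨_, ⟨v, rfl⟩, _, hy, hb⟩ := Submodule.mem_sup.1 (htop ▸ Submodule.mem_top (x := b))
  obtain ⟨t, rfl⟩ := Submodule.mem_span_singleton.1 hy
  exact ⟨v, fun j hj => by simp [← hb, hj]⟩

lemma minimallyInfeasible_restrict (hS : Minimal (fun S => ¬ ∃ v, ∀ i ∈ S, 0 < w i v) S) :
    MinimallyInfeasible (S.restrict w) where
  infeasible := by simpa using hS.prop
  feasible_of_drop i := by
    classical
    obtain ⟨v, hv⟩ := not_not.1 (hS.not_prop_of_lt (Finset.erase_ssubset i.2))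
    exact ⟨v, fun j hj => hv j (Finset.mem_erase.2 ⟨Subtype.coe_ne_coe.2 hj, j.2⟩)⟩

lemma exists_forall_apply_eq_of_ssubset
    (hS : Minimal (fun S => ¬ ∃ v, ∀ i ∈ S, 0 < w i v) S) (hT : T ⊂ S) (b : ι → ℝ) :
    ∃ v, ∀ i ∈ T, w i v = b i := by
  obtain ⟨i, hiS, hiT⟩ := Finset.exists_of_ssubset hT
  obtain ⟨v, hv⟩ := (minimallyInfeasible_restrict hS).exists_forall_ne_apply_eq ⟨i, hiS⟩
    (S.restrict b)
  refine ⟨v, fun j hj => hv ⟨j, hT.1 hj⟩ fun hji => hiT ?_⟩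
  exact Subtype.mk.inj hji ▸ hj

end MinimalSubsystem

section Reorientation

variable {ι E : Type*} [DecidableEq ι] [AddCommGroup E] [Module ℝ E]

/-- The family of forms obtained from `ω` by reversing the sign of those outside `σ`. -/
def reorient (ω : ι → E →ₗ[ℝ] ℝ) (σ : Finset ι) : ι → E →ₗ[ℝ] ℝ := σ.piecewise ω (-ω)

/-- The chamber (possibly empty) on which the forms with index in `σ` are positive and all others
negative. A sign vector is thus encoded by its positive part `σ`. -/
def chamber (ω : ι → E →ₗ[ℝ] ℝ) (σ : Finset ι) : Set E := {v | ∀ i, 0 < reorient ω σ i v}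

variable {ω : ι → E →ₗ[ℝ] ℝ} {σ : Finset ι} {i : ι}

lemma reorient_of_mem (hi : i ∈ σ) : reorient ω σ i = ω i :=
  Finset.piecewise_eq_of_mem σ ω (-ω) hi

lemma reorient_of_notMem (hi : i ∉ σ) : reorient ω σ i = -ω i :=
  Finset.piecewise_eq_of_notMem σ ω (-ω) hi

lemma convex_chamber (ω : ι → E →ₗ[ℝ] ℝ) (σ : Finset ι) : Convex ℝ (chamber ω σ) := by
  rw [chamber, ofPred_forall]
  exact convex_iInter fun i => convex_halfSpace_gt (reorient ω σ i).isLinear 0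

end Reorientation

section Circuits

variable {E : Type*} [NormedAddCommGroup E] [NormedSpace ℝ E]
variable {ω : Fin n → E →ₗ[ℝ] ℝ} {σ A B S : Finset (Fin n)}

lemma mem_halfSpaces_iff (hA : A ⊆ σ) (hB : Disjoint B σ) (v : E) :
    v ∈ (⋂ i ∈ A, Hplus ω i) ∩ (⋂ j ∈ B, Hminus ω j) ↔ ∀ i ∈ A ∪ B, 0 < reorient ω σ i v := by
  have hpos : (∀ i ∈ A, 0 < reorient ω σ i v) ↔ ∀ i ∈ A, 0 < ω i v :=
    forall₂_congr fun i hi => by rw [reorient_of_mem (hA hi)]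
  have hneg : (∀ i ∈ B, 0 < reorient ω σ i v) ↔ ∀ i ∈ B, ω i v < 0 :=
    forall₂_congr fun i hi => by
      rw [reorient_of_notMem (Finset.disjoint_left.1 hB hi), LinearMap.neg_apply, neg_pos]
  simp only [Finset.forall_mem_union, hpos, hneg, mem_inter_iff, mem_iInter₂, Hplus, Hminus,
    mem_ofPred_eq]

lemma mem_signedCircuits_of_minimal
    (hS : Minimal (fun S => ¬ ∃ v, ∀ i ∈ S, 0 < reorient ω σ i v) S) :
    (S ∩ σ, S \ σ) ∈ signedCircuits ω := by
  have hunion : S ∩ σ ∪ S \ σ = S := by rw [Finset.union_comm, Finset.sdiff_union_inter]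
  refine ⟨Finset.disjoint_sdiff_inter S σ |>.symm, ?_, ?_⟩
  · refine eq_empty_iff_forall_notMem.2 fun v hv => hS.prop ⟨v, ?_⟩
    rwa [mem_halfSpaces_iff Finset.inter_subset_right Finset.sdiff_disjoint, hunion] at hv
  · rintro ⟨A, B⟩ hAB hlt
    obtain ⟨v, hv⟩ := exists_forall_apply_eq_of_ssubset hS (hunion ▸ hlt)
      (fun i => if i ∈ σ ↔ i ∈ A then 1 else -1)
    refine ⟨v, (mem_halfSpaces_iff subset_rfl hAB.symm v).2 fun i hi => ?_⟩
    have hone : reorient ω A i v = 1 := by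
      by_cases hσ : i ∈ σ <;> by_cases hA : i ∈ A <;>
        simpa [reorient, hσ, hA, neg_eq_iff_eq_neg] using hv i hi
    exact hone ▸ one_pos

lemma exists_signedCircuit_of_chamber_eq_empty (h : chamber ω σ = ∅) :
    ∃ C ∈ signedCircuits ω, C.1 ⊆ σ ∧ C.2 ⊆ σᶜ := by
  have huniv : ¬ ∃ v, ∀ i ∈ Finset.univ, 0 < reorient ω σ i v := fun ⟨v, hv⟩ =>
    eq_empty_iff_forall_notMem.1 h v fun i => hv i (Finset.mem_univ i)
  obtain ⟨S, hS⟩ := exists_minimal_of_wellFoundedLT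
    (fun S : Finset (Fin n) => ¬ ∃ v, ∀ i ∈ S, 0 < reorient ω σ i v) ⟨_, huniv⟩
  exact ⟨_, mem_signedCircuits_of_minimal hS, Finset.inter_subset_right,
    Finset.subset_compl_iff_disjoint_right.2 Finset.sdiff_disjoint⟩

lemma signedProd_gen_eq_zero_of_chamber_eq_empty (h : chamber ω σ = ∅) :
    signedProd (PAlg.gen (signedCircuits ω)) σ σᶜ = 0 := by
  obtain ⟨D, hD, hP, hN⟩ := exists_signedCircuit_of_chamber_eq_empty h
  exact zero_dvd_iff.1 (PAlg.signedProd_gen_eq_zero hD ▸ signedProd_dvd_signedProd _ hP hN)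

end Circuits

section PositiveSet

/-- The positive part of the sign vector of the point `v`. -/
noncomputable def positiveSet {ι E : Type*} [Fintype ι] [AddCommGroup E] [Module ℝ E]
    (ω : ι → E →ₗ[ℝ] ℝ) (v : E) : Finset ι := {i | 0 < ω i v}

variable {E : Type*} [NormedAddCommGroup E] [NormedSpace ℝ E]

lemma mem_chamber_iff {ω : Fin n → E →ₗ[ℝ] ℝ} {σ : Finset (Fin n)} {v : E} :
    v ∈ chamber ω σ ↔ v ∈ M₁ ω ∧ positiveSet ω v = σ := by
  simp only [chamber, M₁, mem_ofPred_eq, Finset.ext_iff, positiveSet, Finset.mem_filter_univ,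
    ← forall_and]
  refine forall_congr' fun i => ?_
  by_cases hi : i ∈ σ
  · simpa [reorient_of_mem hi, hi] using ne_of_gt
  · simpa [reorient_of_notMem hi, hi, and_comm] using lt_iff_le_and_ne

lemma mem_chamber_positiveSet {ω : Fin n → E →ₗ[ℝ] ℝ} (v : M₁ ω) :
    v.1 ∈ chamber ω (positiveSet ω v) :=
  mem_chamber_iff.2 ⟨v.2, rfl⟩

lemma locallyConstant_factorsThrough_positiveSet {Y : Type*} {ω : Fin n → E →ₗ[ℝ] ℝ}
    (g : LocallyConstant (M₁ ω) Y) :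
    Function.FactorsThrough g fun v : M₁ ω => positiveSet ω v := by
  intro v v' hvv'
  have hsub : chamber ω (positiveSet ω v) ⊆ M₁ ω := fun _ hx => (mem_chamber_iff.1 hx).1
  have hconn : IsPreconnected ((↑) ⁻¹' chamber ω (positiveSet ω v) : Set (M₁ ω)) := by
    rw [← Topology.IsInducing.subtypeVal.isPreconnected_image, Subtype.image_preimage_coe,
      inter_eq_right.2 hsub]
    exact (convex_chamber _ _).isPreconnected
  exact g.apply_eq_of_isPreconnected hconn (mem_chamber_positiveSet v)
    (mem_chamber_iff.2 ⟨v'.2, hvv'.symm⟩)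

end PositiveSet

section Heaviside

variable (ω : Fin n → V →ₗ[ℝ] ℝ)

lemma heaviside_apply (i : Fin n) (v : M₁ ω) :
    heaviside ω i v = (positiveSet ω v : Set (Fin n)).indicator 1 i := by
  simp [heaviside, positiveSet, indicator_apply]

lemma isIdempotentElem_heaviside (i : Fin n) : IsIdempotentElem (heaviside ω i) := by
  ext v
  simp [heaviside]

lemma aeval_heaviside_apply (p : MvPolynomial (Fin n) ℚ) (v : M₁ ω) :
    aeval (heaviside ω) p v = eval ((positiveSet ω v : Set (Fin n)).indicator 1) p := by
  have h := comp_aeval_apply (LocallyConstant.evalₐ ℚ v) p (f := heaviside ω)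
  simpa [heaviside_apply, aeval_eq_eval] using h

lemma signedProd_heaviside_apply (P N : Finset (Fin n)) (v : M₁ ω) :
    signedProd (heaviside ω) P N v =
      if P ⊆ positiveSet ω v ∧ Disjoint N (positiveSet ω v) then 1 else 0 := by
  have h := map_signedProd (LocallyConstant.evalRingHom v) (heaviside ω) P N
  simp only [LocallyConstant.evalRingHom_apply, heaviside_apply] at h
  exact h.trans (signedProd_indicator _ P N)

lemma signedProd_compl_heaviside_apply (σ : Finset (Fin n)) (v : M₁ ω) :
    signedProd (heaviside ω) σ σᶜ v = if positiveSet ω v = σ then 1 else 0 := by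
  simp only [signedProd_heaviside_apply, disjoint_compl_left_iff, ← le_antisymm_iff, eq_comm]

lemma signedProd_heaviside_eq_zero {D : Finset (Fin n) × Finset (Fin n)}
    (hD : D ∈ signedCircuits ω) : signedProd (heaviside ω) D.1 D.2 = 0 := by
  ext v
  rw [signedProd_heaviside_apply]
  refine if_neg fun ⟨hP, hN⟩ => eq_empty_iff_forall_notMem.1 hD.2.1 v ?_
  exact (mem_halfSpaces_iff hP hN v.1).2 fun i _ => mem_chamber_positiveSet v i

/-- The homomorphism `P(𝒞(𝒜)) → H⁰(M₁(𝒜))` sending each `x i` to the Heaviside function `x i`. -/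
noncomputable def heavisideHom : PAlg (signedCircuits ω) →ₐ[ℚ] LocallyConstant (M₁ ω) ℚ :=
  PAlg.lift (heaviside ω) (isIdempotentElem_heaviside ω) fun _ => signedProd_heaviside_eq_zero ω

@[simp]
lemma heavisideHom_gen (i : Fin n) :
    heavisideHom ω (PAlg.gen (signedCircuits ω) i) = heaviside ω i :=
  PAlg.lift_gen _ _ _ i

lemma heavisideHom_aeval_gen (p : MvPolynomial (Fin n) ℚ) :
    heavisideHom ω (aeval (PAlg.gen (signedCircuits ω)) p) = aeval (heaviside ω) p := by
  simp [comp_aeval_apply]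

theorem heavisideHom_surjective : Function.Surjective (heavisideHom ω) := by
  intro g
  have hatom (σ : Finset (Fin n)) :
      heavisideHom ω (signedProd (PAlg.gen (signedCircuits ω)) σ σᶜ) =
        signedProd (heaviside ω) σ σᶜ := by
    simp only [map_signedProd, heavisideHom_gen]
  refine ⟨∑ σ : Finset (Fin n), Function.extend (fun v : M₁ ω => positiveSet ω v) g 0 σ •
    signedProd (PAlg.gen (signedCircuits ω)) σ σᶜ, ?_⟩
  ext v
  rw [← LocallyConstant.evalₐ_apply ℚ v]
  simp only [map_sum, map_smul, hatom, LocallyConstant.evalₐ_apply,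
    signedProd_compl_heaviside_apply]
  simp [(locallyConstant_factorsThrough_positiveSet g).extend_apply]

theorem heavisideHom_injective : Function.Injective (heavisideHom ω) := by
  refine (injective_iff_map_eq_zero _).2 fun y hy => ?_
  obtain ⟨p, rfl⟩ := PAlg.aeval_gen_surjective y
  rw [heavisideHom_aeval_gen] at hy
  rw [aeval_eq_sum_signedProd PAlg.isIdempotentElem_gen]
  refine Finset.sum_eq_zero fun σ _ => ?_
  rcases (chamber ω σ).eq_empty_or_nonempty with hσ | ⟨v, hv⟩
  · rw [signedProd_gen_eq_zero_of_chamber_eq_empty hσ, smul_zero]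
  · obtain ⟨hvM, rfl⟩ := mem_chamber_iff.1 hv
    rw [← aeval_heaviside_apply ω p ⟨v, hvM⟩, hy, LocallyConstant.zero_apply, zero_smul]

end Heaviside

theorem pAlg_iso_locallyConstant_general (ω : Fin n → V →ₗ[ℝ] ℝ) :
    ∃ f : PAlg (signedCircuits ω) ≃ₐ[ℚ] LocallyConstant (M₁ ω) ℚ,
      ∀ i : Fin n, f (Ideal.Quotient.mk (pIdeal (signedCircuits ω)) (X i)) =
        heaviside ω i :=
  ⟨AlgEquiv.ofBijective (heavisideHom ω) ⟨heavisideHom_injective ω, heavisideHom_surjective ω⟩,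
    heavisideHom_gen ω⟩

/-- The `ℚ`-algebra map `P(𝒞(𝒜)) → H⁰(M₁(𝒜))` sending `x i` to the
Heaviside function `x i` is a well-defined isomorphism. -/
theorem pAlg_iso_locallyConstant (ω : Fin n → V →ₗ[ℝ] ℝ) (hω : ∀ i, ω i ≠ 0)
    (hprop : ∀ i j : Fin n, i ≠ j → ∀ c : ℝ, ω i ≠ c • ω j) :
    ∃ f : PAlg (signedCircuits ω) ≃ₐ[ℚ] LocallyConstant (M₁ ω) ℚ,
      ∀ i : Fin n, f (Ideal.Quotient.mk (pIdeal (signedCircuits ω)) (X i)) =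
        heaviside ω i :=
  pAlg_iso_locallyConstant_general ω
end
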